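/- Let R and S be integral domains that are finitely generated ℂ-algebras with the same transcendence degree over ℂ, let ι : R → S be an injective ℂ-algebra homomorphism, assume S is integrally closed in its fraction field (so X = Spec S is normal), let G : R → R be a bijective ℂ-algebra homomorphism, and let F : S → S be a ℂ-algebra homomorphism with ι ∘ G = F ∘ ι. Then there exists a nonempty (hence dense) open subscheme U of Spec S such that the morphism Spec(F) : Spec S → Spec S restricts to an automorphism of U; that is, there is an isomorphism of schemes e : U ≅ U such that the inclusion of U composed with Spec(F) equals e followed by the inclusion of U. -/

import Mathlib

/-!
Regard `R` as a subring of `S` through `ι`. Equality of transcendence degrees makes `S` algebraic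
over `R`, so `F` is injective and `Frac S` is a finite extension of `Frac R`. The extension of `F` to
`Frac S` restricts to an automorphism of `Frac R`, so a dimension count shows that it is an
automorphism of `Frac S`.

Let `J ⊆ R` be the ideal of those `r` for which `S_r` is integral over `R_r` (`integralIdeal`). It is
nonzero because `S` is finitely generated and algebraic over `R`. If `G r ∈ J`, then `r ∈ J`, because
an integral equation for `F s` pulls back to one for `s`. As `R` is Noetherian and `G` is bijective,
this inclusion forces `G⁻¹ J = J` (`comap_eq_of_comap_le`).

For `r ∈ J`, the normal domain `S_r` is the integral closure of `R_r` in `Frac S`. Since `F` maps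
`R_r` onto `R_{G r}` and is an automorphism of `Frac S`, it maps `S_r` isomorphically onto
`S_{G r}` (`awayMap_bijective`). Hence `Spec F` is an isomorphism over each basic open `D(r)` with
`r ∈ J`, with preimage `D(G r)`. The union `U` of these basic opens is therefore its own preimage,
and `Spec F` restricts to an automorphism of it.
-/

open AlgebraicGeometry CategoryTheory

universe u

/-- The transcendence degree of a commutative `k`-algebra `A`: the supremum of the
cardinalities of algebraically independent subsets of `A` over `k`. -/
noncomputable def trdeg (k A : Type*) [CommRing k] [CommRing A] [Algebra k A] : Cardinal :=
  ⨆ s : {s : Set A // AlgebraicIndependent k ((↑) : s → A)}, Cardinal.mk s.1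

/-! ### Isomorphisms over open subschemes -/

/-- Over the basic open `D(r)`, the morphism `Spec B ⟶ Spec A` is `Spec` of the localization
`A_r → B_{f r}`. -/
theorem isIso_restrict_basicOpen {A B : Type u} [CommRing A] [CommRing B] (f : A →+* B) (r : A)
    (h : Function.Bijective (Localization.awayMap f r)) :
    IsIso (Spec.map (CommRingCat.ofHom f) ∣_
      (PrimeSpectrum.basicOpen r : (Spec (CommRingCat.of A)).Opens)) := by
  let g := Spec.map (CommRingCat.ofHom (algebraMap A (Localization.Away r)))
  have hg : g.opensRange = PrimeSpectrum.basicOpen r := by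
    ext1
    exact PrimeSpectrum.localization_away_comap_range _ r
  rw [← hg]
  have : IsLocalization ((Submonoid.powers r).map f) (Localization.Away (f r)) := by
    rw [Submonoid.map_powers]
    exact inferInstanceAs (IsLocalization.Away (f r) _)
  have hp := isPullback_SpecMap_of_isPushout _ _ _ _
    (CommRingCat.isPushout_of_isLocalization (Rₘ := Localization.Away r)
      (Sₘ := Localization.Away (f r)) f (Localization.awayMap f r)
      (by ext x; simp [Localization.awayMap, IsLocalization.Away.map]) (Submonoid.powers r))
  refine (MorphismProperty.arrow_mk_iso_iff (.isomorphisms _)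
      (morphismRestrictOpensRange (Spec.map (CommRingCat.ofHom f)) g)).mpr ?_
  have : IsIso (CommRingCat.ofHom (Localization.awayMap f r)) :=
    (RingEquiv.ofBijective _ h).toCommRingCatIso.isIso_hom
  rw [MorphismProperty.isomorphisms.iff, ← hp.isoPullback_inv_snd]
  infer_instance

/-- Being an isomorphism is local on the target, so it can be checked on each member of a family of
opens covering the given one. -/
theorem isIso_restrict_iSup {X Y : Scheme.{u}} (f : X ⟶ Y) {α : Type u} (V : α → Y.Opens)
    (hV : ∀ i, IsIso (f ∣_ V i)) : IsIso (f ∣_ ⨆ x, V x) := by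
  let 𝒰 := Scheme.Opens.iSupOpenCover V
  refine (IsZariskiLocalAtTarget.iff_of_openCover (P := .isomorphisms _) 𝒰).mpr fun x ↦ ?_
  refine (MorphismProperty.arrow_mk_iso_iff (.isomorphisms _)
    ((morphismRestrictRestrict ..).symm ≪≫ morphismRestrictOpensRange ..)).mp ?_
  have : Scheme.Opens.ι _ ''ᵁ (𝒰.f x).opensRange = V x := by
    simp only [Scheme.Opens.iSupOpenCover, 𝒰, ← Scheme.Hom.opensRange_comp, Scheme.homOfLE_ι,
      Scheme.Opens.opensRange_ι]
  convert! hV x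

/-! ### Algebraic preliminaries -/

/-- If the inclusion were strict, the images of `J` under the powers of `G` would form a strictly
ascending chain of ideals in a Noetherian ring. -/
theorem comap_eq_of_comap_le {R : Type*} [CommRing R] [IsNoetherianRing R] (G : R →+* R)
    (hG : Function.Bijective G) (J : Ideal R) (h : J.comap G ≤ J) : J.comap G = J := by
  let E := RingEquiv.ofBijective G hG
  have hm : StrictMono (Ideal.comap (E.symm : R →+* R)) :=
    Monotone.strictMono_of_injective (fun _ _ h => Ideal.comap_mono h)
      (Ideal.comap_injective_of_surjective _ E.symm.surjective)
  have key : J ≤ J.comap (E.symm : R →+* R) := fun x hx => h (by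
    change E (E.symm x) ∈ J; simpa using hx)
  rcases key.eq_or_lt with e | lt
  · ext x
    have h1 : E x ∈ J.comap (E.symm : R →+* R) ↔ x ∈ J := by simp [Ideal.mem_comap]
    rw [← e] at h1
    exact h1
  · exact absurd (hm.strictMono_iterate_of_lt_map lt) (not_strictMono_of_wellFoundedGT _)

/-- A ring endomorphism of a finite extension `L/K` which restricts to an automorphism of `K` is
surjective: its image is a `K`-subspace of `L` of the same dimension as `L`. -/
theorem surjective_of_semilinear {K L : Type*} [Field K] [Field L] [Algebra K L]
    [FiniteDimensional K L] (φ : L →+* L) (σ : K ≃+* K)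
    (h : ∀ x, φ (algebraMap K L x) = algebraMap K L (σ x)) : Function.Surjective φ := by
  let W : Submodule K L :=
    { φ.range.toAddSubgroup with
      smul_mem' := by
        rintro c _ ⟨y, rfl⟩
        exact ⟨σ.symm c • y, by simp [Algebra.smul_def, h]⟩ }
  let j : L ≃+ W := (RingEquiv.ofBijective φ.rangeRestrict
    ⟨fun a b hab => φ.injective (congrArg Subtype.val hab), φ.rangeRestrict_surjective⟩).toAddEquiv
  have hr : Module.rank K L = Module.rank K W :=
    rank_eq_of_equiv_equiv σ j σ.bijective fun r m => Subtype.ext (by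
      change φ (r • m) = σ r • φ m
      simp [Algebra.smul_def, h])
  have : W = ⊤ := Submodule.eq_top_of_finrank_eq (by simp [Module.finrank, hr])
  intro x
  have hx : x ∈ W := this ▸ Submodule.mem_top
  exact hx

/-! ### The ideal over which `S` becomes integral -/

section
variable (R S : Type*) [CommRing R] [CommRing S] [Algebra R S]

/-- The ideal of those `r : R` for which `S_r` is integral over `R_r`, expressed without
localizations: every `s : S` becomes integral over `R` after multiplication by a power of `r`. For
`R ⊆ S` its zero locus is the complement of the largest open of `Spec R` over which
`Spec S ⟶ Spec R` is integral. -/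
def integralIdeal : Ideal R where
  carrier := {r | ∀ s : S, ∃ n : ℕ, IsIntegral R (r ^ n • s)}
  zero_mem' s := ⟨1, by simpa using isIntegral_zero⟩
  add_mem' := by
    intro a b ha hb s
    obtain ⟨n, hn⟩ := ha s
    obtain ⟨m, hm⟩ := hb s
    refine ⟨n + m, ?_⟩
    rw [add_pow, Finset.sum_smul]
    refine IsIntegral.sum _ fun i _ => ?_
    -- Each monomial of `(a + b) ^ (n + m)` contains `a ^ n` or `b ^ m`.
    rcases le_total n i with hi | hi
    · obtain ⟨k, rfl⟩ := Nat.exists_eq_add_of_le hi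
      convert! hn.smul (a ^ k * b ^ (n + m - (n + k)) * ((n + m).choose (n + k) : R)) using 1
      rw [smul_smul]; congr 1; ring
    · obtain ⟨k, hk⟩ := Nat.exists_eq_add_of_le (show m ≤ n + m - i by omega)
      rw [hk]
      convert! hm.smul (a ^ i * b ^ k * ((n + m).choose i : R)) using 1
      rw [smul_smul]; congr 1; ring
  smul_mem' := by
    intro c r hr s
    obtain ⟨n, hn⟩ := hr s
    refine ⟨n, ?_⟩
    rw [smul_eq_mul, mul_pow, mul_smul]
    exact hn.smul _

variable {R S}

/-- A common denominator making finitely many generators of `S` integral lies in the ideal. -/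
theorem exists_mem_integralIdeal [IsDomain R] [Algebra.FiniteType R S] [Algebra.IsAlgebraic R S] :
    ∃ r ∈ integralIdeal R S, r ≠ 0 := by
  obtain ⟨t, ht⟩ := (Algebra.FiniteType.out : (⊤ : Subalgebra R S).FG)
  obtain ⟨r, hr, hint⟩ := Algebra.IsAlgebraic.exists_integral_multiples R t
  refine ⟨r, fun s => ?_, hr⟩
  have hs : s ∈ Algebra.adjoin R (t : Set S) := ht ▸ Algebra.mem_top
  induction hs using Algebra.adjoin_induction with
  | mem x hx => exact ⟨1, by simpa using hint x hx⟩
  | algebraMap c => exact ⟨0, by simpa using isIntegral_algebraMap⟩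
  | add x y _ _ hx hy =>
    obtain ⟨n, hn⟩ := hx
    obtain ⟨m, hm⟩ := hy
    refine ⟨n + m, ?_⟩
    rw [smul_add]
    refine .add ?_ ?_
    · rw [add_comm, pow_add, mul_smul]; exact hn.smul _
    · rw [pow_add, mul_smul]; exact hm.smul _
  | mul x y _ _ hx hy =>
    obtain ⟨n, hn⟩ := hx
    obtain ⟨m, hm⟩ := hy
    refine ⟨n + m, ?_⟩
    rw [pow_add, ← smul_mul_smul_comm]
    exact hn.mul hm

/-- Integrality over `R` descends along an injective endomorphism `φ` lying over a surjective
endomorphism `G` of `R`: lift the coefficients of a monic equation along `G`. -/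
theorem isIntegral_of_map [Nontrivial R] {T : Type*} [CommRing T] [Algebra R T] (φ : T →+* T)
    (hφ : Function.Injective φ) (G : R →+* R)
    (hG : Function.Surjective G) (h : ∀ r, φ (algebraMap R T r) = algebraMap R T (G r))
    {x : T} (hx : IsIntegral R (φ x)) : IsIntegral R x := by
  obtain ⟨p, hp, he⟩ := hx
  obtain ⟨q, rfl, -, hq⟩ := Polynomial.lifts_and_degree_eq_and_monic
    ((Polynomial.mem_lifts p).2 (Polynomial.map_surjective G hG p)) hp
  refine ⟨q, hq, hφ ?_⟩
  rw [map_zero, ← he, Polynomial.hom_eval₂, Polynomial.eval₂_map]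
  congr 1
  ext r
  exact h r

/-- If `(G r)ⁿ F(s) = F(rⁿ s)` is integral over `R`, then so is `rⁿ s`; hence
`G r ∈ integralIdeal R S` implies `r ∈ integralIdeal R S`. -/
theorem comap_integralIdeal_le [Nontrivial R] (F : S →+* S) (hF : Function.Injective F) (G : R →+* R)
    (hG : Function.Surjective G) (h : ∀ r, F (algebraMap R S r) = algebraMap R S (G r)) :
    (integralIdeal R S).comap G ≤ integralIdeal R S := by
  intro r hr s
  obtain ⟨n, hn⟩ := hr (F s)
  refine ⟨n, isIntegral_of_map F hF G hG h ?_⟩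
  simpa [Algebra.smul_def, h] using hn

/-- A nonzero element of `S` divides a nonzero element of `R`, on which `F` acts through the injective
map `G`. -/
theorem map_injective_of_isAlgebraic [IsDomain S] [Algebra.IsAlgebraic R S]
    (hinj : Function.Injective (algebraMap R S)) (F : S →+* S) (G : R →+* R)
    (hG : Function.Injective G) (h : ∀ r, F (algebraMap R S r) = algebraMap R S (G r)) :
    Function.Injective F := by
  rw [injective_iff_map_eq_zero]
  intro s hs
  by_contra hne
  obtain ⟨r, hr, c, hc⟩ := (Algebra.IsAlgebraic.isAlgebraic (R := R) s).exists_nonzero_dvd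
    (mem_nonZeroDivisors_of_ne_zero hne)
  have h0 : algebraMap R S (G r) = 0 := by rw [← h, hc, map_mul, hs, zero_mul]
  exact hr (hG (hinj (by simpa using h0)))

/-- Elements of `S` integral over `R` lie in the image of `F`. The extension of `F` to `Frac S` is
surjective because `Frac S` is finite over `Frac R`; a preimage of an integral element is again
integral over `R`, hence lies in the integrally closed domain `S`. -/
theorem exists_preimage_of_isIntegral [IsDomain R] [IsDomain S] [IsIntegrallyClosed S]
    [Algebra.FiniteType R S] [Algebra.IsAlgebraic R S]
    (hinj : Function.Injective (algebraMap R S)) (F : S →+* S) (hF : Function.Injective F)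
    (G : R →+* R) (hG : Function.Bijective G)
    (h : ∀ r, F (algebraMap R S r) = algebraMap R S (G r)) {a : S} (ha : IsIntegral R a) :
    ∃ b, F b = a := by
  let K := FractionRing R
  let L := FractionRing S
  have : FaithfulSMul R S := (faithfulSMul_iff_algebraMap_injective R S).2 hinj
  let _ : Algebra K L := FractionRing.liftAlgebra R L
  have : IsScalarTower R K L := inferInstance
  have : Algebra.IsAlgebraic S L := IsLocalization.isAlgebraic L (nonZeroDivisors S)
  have : Algebra.IsAlgebraic R L := Algebra.IsAlgebraic.trans R S L
  have : Algebra.IsAlgebraic K L := inferInstance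
  have : Algebra.EssFiniteType S L := .of_isLocalization _ (nonZeroDivisors S)
  have : Algebra.EssFiniteType R L := .comp R S L
  have : Algebra.EssFiniteType K L := .of_comp R K L
  have : FiniteDimensional K L := Algebra.finite_of_essFiniteType_of_isAlgebraic
  let φ : L →+* L := IsFractionRing.map hF
  let σ : K ≃+* K := IsFractionRing.ringEquivOfRingEquiv (RingEquiv.ofBijective G hG)
  have hφ : ∀ s : S, φ (algebraMap S L s) = algebraMap S L (F s) := fun s =>
    IsLocalization.map_eq _ s
  have hσ : ∀ r : R, σ (algebraMap R K r) = algebraMap R K (G r) := fun r =>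
    IsFractionRing.ringEquivOfRingEquiv_algebraMap _ r
  have hR : ∀ r : R, φ (algebraMap R L r) = algebraMap R L (G r) := fun r => by
    rw [IsScalarTower.algebraMap_apply R S L, hφ, h, ← IsScalarTower.algebraMap_apply]
  have hK : φ.comp (algebraMap K L) = (algebraMap K L).comp σ.toRingHom := by
    refine IsLocalization.ringHom_ext (nonZeroDivisors R) ?_
    ext r
    simp [hσ, hR, ← IsScalarTower.algebraMap_apply R K L]
  obtain ⟨b, hb⟩ := surjective_of_semilinear φ σ (fun x => RingHom.congr_fun hK x) (algebraMap S L a)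
  have hbi : IsIntegral R b := isIntegral_of_map φ φ.injective G hG.surjective hR
    (hb ▸ ha.map (IsScalarTower.toAlgHom R S L))
  obtain ⟨c, rfl⟩ := IsIntegrallyClosed.isIntegral_iff.1 (hbi.tower_top (A := S))
  exact ⟨c, IsFractionRing.injective S L (by rw [← hφ, hb])⟩

/-- `F` induces an isomorphism `S_r → S_{G r}` as soon as `S_{G r}` is integral over `R_{G r}`. -/
theorem awayMap_bijective [IsDomain R] [IsDomain S] [IsIntegrallyClosed S]
    [Algebra.FiniteType R S] [Algebra.IsAlgebraic R S]
    (hinj : Function.Injective (algebraMap R S)) (F : S →+* S) (hF : Function.Injective F)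
    (G : R →+* R) (hG : Function.Bijective G)
    (h : ∀ r, F (algebraMap R S r) = algebraMap R S (G r)) {r : R}
    (hr : G r ∈ integralIdeal R S) :
    Function.Bijective (Localization.awayMap F (algebraMap R S r)) := by
  refine ⟨Localization.awayMap_injective_iff.2
      fun a ha => ⟨0, by simpa using hF (by simpa using ha)⟩,
    Localization.awayMap_surjective_iff.2 fun a => ?_⟩
  obtain ⟨n, hn⟩ := hr a
  obtain ⟨b, hb⟩ := exists_preimage_of_isIntegral hinj F hF G hG h hn
  exact ⟨b, n, by simpa [Algebra.smul_def, h] using hb⟩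

end

/-- An extension of affine domains of equal transcendence degree is algebraic, by additivity of the
transcendence degree in towers and its finiteness. -/
theorem isAlgebraic_of_trdeg_eq {k : Type*} {R S : Type u} [Field k] [CommRing R] [IsDomain R]
    [CommRing S] [IsDomain S] [Algebra k R] [Algebra k S] [Algebra R S] [IsScalarTower k R S]
    [Algebra.FiniteType k R] [FaithfulSMul R S] (h : trdeg k R = trdeg k S) :
    Algebra.IsAlgebraic R S := by
  have hadd := trdeg_add_eq k R (A := S)
  have hlt : Algebra.trdeg k R < Cardinal.aleph0 := trdeg_lt_aleph0_of_finiteType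
  have h' : Algebra.trdeg k R = Algebra.trdeg k S := h
  rw [← trdeg_eq_zero_iff]
  exact Cardinal.eq_of_add_eq_add_left (by rw [hadd, add_zero, h']) hlt

/-! ### The invariant open subscheme -/

/-- Let `R`, `S` be affine domains over `ℂ` with the same transcendence degree,
`ι : R → S` an injective `ℂ`-algebra homomorphism, `S` integrally closed in its fraction
field (so `X = Spec S` is normal), `G : R → R` a bijective `ℂ`-algebra homomorphism, and
`F : S → S` a `ℂ`-algebra homomorphism with `ι ∘ G = F ∘ ι`.  Then there is a nonempty
(hence dense) open subscheme `U` of `Spec S` such that `Spec F : Spec S ⟶ Spec S`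
restricts to an automorphism of `U`. -/
theorem exists_open_subscheme_restriction_automorphism_up
    {R S : Type u} [CommRing R] [IsDomain R] [CommRing S] [IsDomain S]
    [Algebra ℂ R] [Algebra ℂ S] [Algebra.FiniteType ℂ R] [Algebra.FiniteType ℂ S]
    [IsIntegrallyClosed S]
    (htr : trdeg ℂ R = trdeg ℂ S)
    (ι : R →ₐ[ℂ] S) (hι : Function.Injective ι)
    (G : R →ₐ[ℂ] R) (hG : Function.Bijective G)
    (F : S →ₐ[ℂ] S) (hcomm : ∀ r, ι (G r) = F (ι r)) :
    ∃ U : (Spec (CommRingCat.of S)).Opens, Nonempty ↥U ∧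
      ∃ e : U.toScheme ≅ U.toScheme,
        U.ι ≫ Spec.map (CommRingCat.ofHom F.toRingHom) = e.hom ≫ U.ι := by
  let _ : Algebra R S := ι.toRingHom.toAlgebra
  have : IsScalarTower ℂ R S := .of_algebraMap_eq fun x => (ι.commutes x).symm
  have hinj : Function.Injective (algebraMap R S) := hι
  have : FaithfulSMul R S := (faithfulSMul_iff_algebraMap_injective R S).2 hinj
  have : Algebra.FiniteType R S := .of_restrictScalars_finiteType ℂ R S
  have : IsNoetherianRing R := Algebra.FiniteType.isNoetherianRing ℂ R
  have : Algebra.IsAlgebraic R S := isAlgebraic_of_trdeg_eq htr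
  have h : ∀ r, F.toRingHom (algebraMap R S r) = algebraMap R S (G.toRingHom r) :=
    fun r => (hcomm r).symm
  have hF := map_injective_of_isAlgebraic hinj F.toRingHom G.toRingHom hG.injective h
  let J := integralIdeal R S
  have hJ : J.comap G.toRingHom = J := comap_eq_of_comap_le _ hG _
    (comap_integralIdeal_le F.toRingHom hF G.toRingHom hG.surjective h)
  have hJ' (r : R) : G.toRingHom r ∈ J ↔ r ∈ J := by
    rw [← Ideal.mem_comap, hJ]
  let f := Spec.map (CommRingCat.ofHom F.toRingHom)
  let V : J → (Spec (CommRingCat.of S)).Opens := fun r => PrimeSpectrum.basicOpen (algebraMap R S r)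
  let U := ⨆ r, V r
  have hiso : IsIso (f ∣_ U) := isIso_restrict_iSup f V fun r =>
    isIso_restrict_basicOpen _ _ (awayMap_bijective hinj _ hF _ hG h ((hJ' r).2 r.2))
  have hU : f ⁻¹ᵁ U = U := by
    have hpre (r : R) : f ⁻¹ᵁ (PrimeSpectrum.basicOpen (algebraMap R S r)) =
        PrimeSpectrum.basicOpen (algebraMap R S (G.toRingHom r)) := by
      rw [← h]; rfl
    have hsup : f ⁻¹ᵁ U = ⨆ r, f ⁻¹ᵁ V r := Scheme.Hom.preimage_iSup ..
    rw [hsup]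
    refine le_antisymm (iSup_le fun r => ?_) (iSup_le fun r => ?_)
    · rw [hpre]
      exact le_iSup V ⟨G.toRingHom r, (hJ' r).2 r.2⟩
    · obtain ⟨t, ht⟩ := hG.surjective r
      have htJ : t ∈ J := (hJ' t).1 (by change G t ∈ J; rw [ht]; exact r.2)
      refine le_trans (le_of_eq ?_) (le_iSup (fun r => f ⁻¹ᵁ V r) ⟨t, htJ⟩)
      change _ = f ⁻¹ᵁ (PrimeSpectrum.basicOpen (algebraMap R S t))
      rw [hpre]
      change PrimeSpectrum.basicOpen (algebraMap R S r) =
        PrimeSpectrum.basicOpen (algebraMap R S (G t))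
      rw [ht]
  refine ⟨U, ?_, (Spec (CommRingCat.of S)).isoOfEq hU.symm ≪≫ asIso (f ∣_ U), ?_⟩
  · obtain ⟨r, hr, hr0⟩ := exists_mem_integralIdeal (R := R) (S := S)
    refine ⟨⟨(⊥ : PrimeSpectrum S), ?_⟩⟩
    refine (le_iSup V ⟨r, hr⟩) ?_
    change algebraMap R S r ∉ (⊥ : Ideal S)
    simpa using hr0
  · rw [Iso.trans_hom, asIso_hom, Category.assoc, morphismRestrict_ι, Scheme.isoOfEq_hom_ι_assoc]
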